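/- Gaussian kernel integral bound: there exist constants C > 0 such that for all sufficiently small ε ≥ 0, ϱ ≥ 0 and all θ in a neighborhood of 1, and every v ∈ R^3, ∫_{R^3} ( |v-v'| + |v-v'|^{-1} ) exp( -((1-ε)/(8θ)) |v-v'|^2 - ((1-ε)/(8θ)) (|v|^2 - |v'|^2)^2/|v-v'|^2 ) · ( (1+|v|^2)^{ℓ/2} e^{±ϱ|v|^2/(4θ)} ) / ( (1+|v'|^2)^{ℓ/2} e^{±ϱ|v'|^2/(4θ)} ) dv' ≤ C/(1+|v|). -/

import Mathlib

open Real MeasureTheory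

open Metric Module Set
open scoped RealInnerProductSpace

/-!
Writing `v' = v + x` and `r = |x|`, the difference `|v|² - |v'|²` equals `-(r² + 2⟨v, x⟩)`, so the
exponent controls both `r²` and `(⟨v, x⟩ / r)²`; the exponential weights are absorbed by Young's
inequality and the polynomial ones by Peetre's inequality, at the price of part of the Gaussian in
`r`. What remains is a radial function times `exp (-κ (⟨v, x⟩ / r)²)`, which is homogeneous of
degree zero in `x`, so only its average over the unit ball matters. There `r ≤ 1` allows replacing
`⟨v, x⟩ / r` by `⟨v, x⟩`, and a linear change of variables evaluates the resulting anisotropic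
Gaussian: it is proportional to `(1 + κ |v|²) ^ (-1/2)`, which is the claimed decay.
-/

section Radial

variable {E : Type*} [NormedAddCommGroup E] [NormedSpace ℝ E] [FiniteDimensional ℝ E]
  [Nontrivial E] [MeasurableSpace E] [BorelSpace E] (μ : Measure E) [μ.IsAddHaarMeasure]

theorem integral_norm_mul_eq_toSphere_mul_volumeIoiPow (f : ℝ → ℝ) {h : E → ℝ}
    (hh : ∀ r : ℝ, 0 < r → ∀ x, h (r • x) = h x) :
    ∫ x, f ‖x‖ * h x ∂μ =
      (∫ ω, h ω ∂μ.toSphere) *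
        ∫ r : Ioi (0 : ℝ), f r ∂Measure.volumeIoiPow (finrank ℝ E - 1) :=
  calc ∫ x, f ‖x‖ * h x ∂μ
      = ∫ x : ({0}ᶜ : Set E), f ‖x.1‖ * h x.1 ∂μ.comap (↑) := by
        rw [integral_subtype_comap (measurableSet_singleton _).compl fun x ↦ f ‖x‖ * h x,
          restrict_compl_singleton]
    _ = ∫ x : ({0}ᶜ : Set E), h (‖x.1‖⁻¹ • x.1) * f ‖x.1‖ ∂μ.comap (↑) := by
        refine integral_congr_ae (.of_forall fun x ↦ ?_)
        simp only [hh _ (inv_pos.2 (norm_pos_iff.2 x.2)), mul_comm]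
    _ = ∫ z, h z.1 * f z.2 ∂μ.toSphere.prod (Measure.volumeIoiPow (finrank ℝ E - 1)) := by
        simpa using μ.measurePreserving_homeomorphUnitSphereProd.integral_comp
          (Homeomorph.measurableEmbedding _) fun z ↦ h z.1 * f z.2
    _ = _ := integral_prod_mul (fun ω : sphere (0 : E) 1 ↦ h ω) fun r : Ioi (0 : ℝ) ↦ f r

theorem integral_norm_mul_eq_mul_setAverage_ball (f : ℝ → ℝ) {h : E → ℝ}
    (hh : ∀ r : ℝ, 0 < r → ∀ x, h (r • x) = h x) :
    ∫ x, f ‖x‖ * h x ∂μ = (∫ x, f ‖x‖ ∂μ) * ⨍ x in ball 0 1, h x ∂μ := by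
  set R : (ℝ → ℝ) → ℝ :=
    fun g ↦ ∫ r : Ioi (0 : ℝ), g r ∂Measure.volumeIoiPow (finrank ℝ E - 1)
  have polar (g : ℝ → ℝ) : ∫ x, g ‖x‖ * h x ∂μ = (∫ ω, h ω ∂μ.toSphere) * R g :=
    integral_norm_mul_eq_toSphere_mul_volumeIoiPow μ g hh
  have polar_one (g : ℝ → ℝ) : ∫ x, g ‖x‖ ∂μ = μ.toSphere.real univ * R g := by
    simpa using integral_norm_mul_eq_toSphere_mul_volumeIoiPow μ g (h := fun _ ↦ 1) fun _ _ _ ↦ rfl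
  have indicator_mul (g : E → ℝ) (x : E) :
      (Iio (1 : ℝ)).indicator (1 : ℝ → ℝ) ‖x‖ * g x = (ball (0 : E) 1).indicator g x := by
    simp [indicator]
  have ball_integral :
      ∫ x in ball 0 1, h x ∂μ = (∫ ω, h ω ∂μ.toSphere) * R ((Iio 1).indicator 1) := by
    simp only [← polar, indicator_mul, integral_indicator measurableSet_ball]
  have ball_volume : μ.real (ball 0 1) = μ.toSphere.real univ * R ((Iio 1).indicator 1) := by
    rw [← polar_one, ← integral_indicator_one measurableSet_ball]
    simp only [← indicator_mul, Pi.one_apply, mul_one]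
  have ball_volume_ne : μ.real (ball (0 : E) 1) ≠ 0 :=
    (ENNReal.toReal_pos (measure_ball_pos μ 0 one_pos).ne' measure_ball_lt_top.ne).ne'
  have sphere_ne : μ.toSphere.real univ ≠ 0 := left_ne_zero_of_mul (ball_volume ▸ ball_volume_ne)
  have radial_ne : R ((Iio 1).indicator 1) ≠ 0 :=
    right_ne_zero_of_mul (ball_volume ▸ ball_volume_ne)
  rw [setAverage_eq, smul_eq_mul, ball_integral, polar_one, polar, ball_volume]
  field_simp

theorem integrable_norm_rpow_mul_exp_neg_mul_sq {b s : ℝ} (hb : 0 < b) (hs : -finrank ℝ E < s) :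
    Integrable (fun x : E ↦ ‖x‖ ^ s * exp (-b * ‖x‖ ^ 2)) μ := by
  rw [integrable_fun_norm_addHaar μ (f := fun r ↦ r ^ s * exp (-b * r ^ 2))]
  have hdim : ((finrank ℝ E - 1 : ℕ) : ℝ) = finrank ℝ E - 1 := Nat.cast_pred finrank_pos
  refine (integrableOn_rpow_mul_exp_neg_mul_sq (s := (finrank ℝ E - 1 : ℕ) + s) hb
    (by linarith)).congr_fun (fun r hr ↦ ?_) measurableSet_Ioi
  simp only [smul_eq_mul, rpow_add (mem_Ioi.1 hr), rpow_natCast, mul_assoc]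

end Radial

theorem exists_inv_sqrt_one_add_mul_sq_le {κ : ℝ} (hκ : 0 < κ) :
    ∃ C > 0, ∀ t : ℝ, 0 ≤ t → (√(1 + κ * t ^ 2))⁻¹ ≤ C / (1 + t) := by
  refine ⟨√(1 + κ⁻¹), by positivity, fun t ht ↦ ?_⟩
  have cauchy_schwarz : 1 + t ≤ √(1 + κ⁻¹) * √(1 + κ * t ^ 2) := by
    rw [← sqrt_mul (by positivity)]
    refine le_sqrt_of_sq_le ?_
    have expand : (1 + κ⁻¹) * (1 + κ * t ^ 2) - (1 + t) ^ 2 = κ⁻¹ * (κ * t - 1) ^ 2 := by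
      field_simp
      ring
    linarith [show 0 ≤ κ⁻¹ * (κ * t - 1) ^ 2 by positivity]
  rw [inv_eq_one_div, div_le_div_iff₀ (by positivity) (by positivity), one_mul]
  exact cauchy_schwarz

section Gaussian

variable {E : Type*} [NormedAddCommGroup E] [InnerProductSpace ℝ E]

theorem exists_linearMap_det_eq_sqrt_norm_sq_eq [FiniteDimensional ℝ E] {κ : ℝ}
    (hκ : 0 ≤ κ) (v : E) :
    ∃ L : E →ₗ[ℝ] E, LinearMap.det L = √(1 + κ * ‖v‖ ^ 2) ∧
      ∀ x, ‖L x‖ ^ 2 = ‖x‖ ^ 2 + κ * ⟪v, x⟫ ^ 2 := by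
  set q := √(1 + κ * ‖v‖ ^ 2)
  have hq : q ^ 2 = 1 + κ * ‖v‖ ^ 2 := sq_sqrt (by positivity)
  have hq₀ : 0 ≤ q := sqrt_nonneg _
  -- The coefficient `α = κ / (1 + q)` solves `2 * α + α ^ 2 * ‖v‖ ^ 2 = κ`.
  refine ⟨LinearMap.transvection (innerₗ E v) ((κ / (1 + q)) • v), ?_, fun x ↦ ?_⟩
  · rw [LinearMap.transvection.det, map_smul, innerₗ_apply_apply, real_inner_self_eq_norm_sq,
      smul_eq_mul]
    field_simp
    linear_combination -hq
  · rw [LinearMap.transvection.apply, innerₗ_apply_apply, norm_add_sq_real, smul_smul,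
      real_inner_smul_right, norm_smul, mul_pow, real_inner_comm v x, norm_eq_abs, sq_abs]
    field_simp
    linear_combination (-κ * ⟪v, x⟫ ^ 2) * hq

/-- The Gaussian `exp (-κ (|v| cos φ)²)` in the component of `v` along the direction of `x`, where
`φ` is the angle between `v` and `x`: the angular factor of the kernel bound. It is homogeneous of
degree zero in `x`, with value `1` at `x = 0`. -/
noncomputable def angularGaussian (κ : ℝ) (v x : E) : ℝ :=
  exp (-κ * (⟪v, x⟫ / ‖x‖) ^ 2)

theorem angularGaussian_nonneg (κ : ℝ) (v x : E) : 0 ≤ angularGaussian κ v x :=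
  (exp_pos _).le

theorem angularGaussian_le_one {κ : ℝ} (hκ : 0 ≤ κ) (v x : E) : angularGaussian κ v x ≤ 1 := by
  rw [angularGaussian, exp_le_one_iff, neg_mul, neg_nonpos]
  positivity

theorem angularGaussian_smul_right (κ : ℝ) (v : E) {r : ℝ} (hr : 0 < r) (x : E) :
    angularGaussian κ v (r • x) = angularGaussian κ v x := by
  simp only [angularGaussian, real_inner_smul_right, norm_smul_of_nonneg hr.le,
    mul_div_mul_left _ _ hr.ne']

theorem angularGaussian_le_exp_neg_norm_sq_add_mul_inner_sq {κ : ℝ} (hκ : 0 ≤ κ) (v : E) {x : E}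
    (hx : ‖x‖ ≤ 1) :
    angularGaussian κ v x ≤ exp 1 * exp (-(‖x‖ ^ 2 + κ * ⟪v, x⟫ ^ 2)) := by
  have inner_le : ⟪v, x⟫ ^ 2 ≤ (⟪v, x⟫ / ‖x‖) ^ 2 := by
    rcases eq_or_ne x 0 with rfl | hx₀
    · simp
    · rw [div_pow]
      exact le_div_self (sq_nonneg _) (by positivity) (pow_le_one₀ (norm_nonneg x) hx)
  rw [angularGaussian, ← exp_add, exp_le_exp]
  linarith [pow_le_one₀ (n := 2) (norm_nonneg x) hx, mul_le_mul_of_nonneg_left inner_le hκ]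

variable [MeasurableSpace E] [BorelSpace E]

theorem measurable_angularGaussian (κ : ℝ) (v : E) : Measurable (angularGaussian κ v) := by
  have : Measurable fun x ↦ ⟪v, x⟫ := (innerSL ℝ v).measurable
  unfold angularGaussian
  fun_prop

variable (μ : Measure E)

theorem integrable_norm_mul_angularGaussian {f : ℝ → ℝ} (hf : Integrable (fun x : E ↦ f ‖x‖) μ)
    {κ : ℝ} (hκ : 0 ≤ κ) (v : E) : Integrable (fun x ↦ f ‖x‖ * angularGaussian κ v x) μ :=
  hf.mul_bdd (c := 1) (measurable_angularGaussian κ v).aestronglyMeasurable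
    (.of_forall fun x ↦ (norm_of_nonneg (angularGaussian_nonneg κ v x)).trans_le
      (angularGaussian_le_one hκ v x))

variable [FiniteDimensional ℝ E] [μ.IsAddHaarMeasure]

theorem integral_exp_neg_norm_sq_add_mul_inner_sq {κ : ℝ} (hκ : 0 ≤ κ) (v : E) :
    ∫ x, exp (-(‖x‖ ^ 2 + κ * ⟪v, x⟫ ^ 2)) ∂μ =
      (√(1 + κ * ‖v‖ ^ 2))⁻¹ * ∫ x, exp (-‖x‖ ^ 2) ∂μ := by
  obtain ⟨L, hdet, hL⟩ := exists_linearMap_det_eq_sqrt_norm_sq_eq hκ v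
  have hdet_pos : 0 < LinearMap.det L := hdet ▸ sqrt_pos.2 (by positivity)
  calc ∫ x, exp (-(‖x‖ ^ 2 + κ * ⟪v, x⟫ ^ 2)) ∂μ
      = ∫ x, exp (-‖L x‖ ^ 2) ∂μ := by simp only [hL]
    _ = ∫ x, exp (-‖x‖ ^ 2) ∂μ.map L :=
        (integral_map L.continuous_of_finiteDimensional.aemeasurable
          (by fun_prop : Continuous fun x : E ↦ exp (-‖x‖ ^ 2)).aestronglyMeasurable).symm
    _ = _ := by
        rw [Measure.map_linearMap_addHaar_eq_smul_addHaar μ hdet_pos.ne', integral_smul_measure,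
          abs_of_pos (inv_pos.2 hdet_pos), ENNReal.toReal_ofReal (inv_pos.2 hdet_pos).le, hdet,
          smul_eq_mul]

theorem exists_setAverage_ball_angularGaussian_le [Nontrivial E] {κ : ℝ} (hκ : 0 < κ) :
    ∃ C > 0, ∀ v : E, ⨍ x in ball 0 1, angularGaussian κ v x ∂μ ≤ C / (1 + ‖v‖) := by
  obtain ⟨C, hC, hsqrt⟩ := exists_inv_sqrt_one_add_mul_sq_le hκ
  set G := ∫ x : E, exp (-‖x‖ ^ 2) ∂μ
  have gaussian_integrable : Integrable (fun x : E ↦ exp (-‖x‖ ^ 2)) μ := by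
    simpa using integrable_norm_rpow_mul_exp_neg_mul_sq μ (E := E) one_pos (s := 0)
      (by simpa using finrank_pos)
  have G_pos : 0 < G := integral_exp_pos gaussian_integrable
  have ball_pos : 0 < μ.real (ball (0 : E) 1) :=
    ENNReal.toReal_pos (measure_ball_pos μ 0 one_pos).ne' measure_ball_lt_top.ne
  refine ⟨(μ.real (ball (0 : E) 1))⁻¹ * (exp 1 * (C * G)), by positivity, fun v ↦ ?_⟩
  have anisotropic_integrable :
      Integrable (fun x : E ↦ exp 1 * exp (-(‖x‖ ^ 2 + κ * ⟪v, x⟫ ^ 2))) μ := by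
    refine (gaussian_integrable.mono' (by fun_prop) (.of_forall fun x ↦ ?_)).const_mul _
    rw [norm_of_nonneg (exp_pos _).le, exp_le_exp]
    linarith [show 0 ≤ κ * ⟪v, x⟫ ^ 2 by positivity]
  rw [setAverage_eq, smul_eq_mul, mul_div_assoc]
  gcongr
  calc ∫ x in ball 0 1, angularGaussian κ v x ∂μ
      ≤ ∫ x in ball 0 1, exp 1 * exp (-(‖x‖ ^ 2 + κ * ⟪v, x⟫ ^ 2)) ∂μ := by
        refine integral_mono_of_nonneg (.of_forall <| angularGaussian_nonneg κ v)
          anisotropic_integrable.integrableOn ?_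
        filter_upwards [ae_restrict_mem measurableSet_ball] with x hx
        exact angularGaussian_le_exp_neg_norm_sq_add_mul_inner_sq hκ.le v
          (mem_ball_zero_iff.1 hx).le
    _ ≤ ∫ x, exp 1 * exp (-(‖x‖ ^ 2 + κ * ⟪v, x⟫ ^ 2)) ∂μ :=
        setIntegral_le_integral anisotropic_integrable (.of_forall fun x ↦ by positivity)
    _ = exp 1 * ((√(1 + κ * ‖v‖ ^ 2))⁻¹ * G) := by
        rw [integral_const_mul, integral_exp_neg_norm_sq_add_mul_inner_sq μ hκ.le]
    _ ≤ exp 1 * (C / (1 + ‖v‖) * G) := by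
        gcongr
        exact hsqrt _ (norm_nonneg v)
    _ = exp 1 * (C * G) / (1 + ‖v‖) := by ring

theorem exists_integral_norm_mul_angularGaussian_le [Nontrivial E] (f : ℝ → ℝ) {κ : ℝ}
    (hκ : 0 < κ) :
    ∃ C > 0, ∀ v : E, ∫ x, f ‖x‖ * angularGaussian κ v x ∂μ ≤ C / (1 + ‖v‖) := by
  obtain ⟨A, hA, haverage⟩ := exists_setAverage_ball_angularGaussian_le μ hκ
  set I := ∫ x, f ‖x‖ ∂μ
  refine ⟨(|I| + 1) * A, by positivity, fun v ↦ ?_⟩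
  have average_nonneg : 0 ≤ ⨍ x in ball 0 1, angularGaussian κ v x ∂μ :=
    integral_nonneg (angularGaussian_nonneg κ v)
  calc ∫ x, f ‖x‖ * angularGaussian κ v x ∂μ
      = I * ⨍ x in ball 0 1, angularGaussian κ v x ∂μ :=
        integral_norm_mul_eq_mul_setAverage_ball μ f fun _ hr ↦ angularGaussian_smul_right κ v hr
    _ ≤ (|I| + 1) * (A / (1 + ‖v‖)) := by
        gcongr
        · linarith [le_abs_self I]
        · exact haverage v
    _ = (|I| + 1) * A / (1 + ‖v‖) := (mul_div_assoc ..).symm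

end Gaussian

section Weight

variable {E : Type*} [SeminormedAddCommGroup E]

theorem one_add_norm_sq_le_mul (v w : E) :
    1 + ‖v‖ ^ 2 ≤ 2 * (1 + ‖v - w‖ ^ 2) * (1 + ‖w‖ ^ 2) := by
  have triangle : ‖v‖ ^ 2 ≤ (‖v - w‖ + ‖w‖) ^ 2 := by
    gcongr
    simpa using norm_add_le (v - w) w
  linarith [add_sq_le (a := ‖v - w‖) (b := ‖w‖), sq_nonneg (‖v - w‖ * ‖w‖)]

theorem one_add_norm_sq_rpow_div_le (s : ℝ) (v w : E) :
    (1 + ‖v‖ ^ 2) ^ s / (1 + ‖w‖ ^ 2) ^ s ≤ (2 * (1 + ‖v - w‖ ^ 2)) ^ |s| := by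
  rcases le_total 0 s with hs | hs
  · rw [abs_of_nonneg hs, ← div_rpow (by positivity) (by positivity)]
    gcongr
    exact div_le_of_le_mul₀ (by positivity) (by positivity) (one_add_norm_sq_le_mul v w)
  · rw [abs_of_nonpos hs, ← div_rpow (by positivity) (by positivity), ← inv_div,
      inv_rpow (by positivity), ← rpow_neg (by positivity), norm_sub_rev]
    gcongr
    · linarith
    · exact div_le_of_le_mul₀ (by positivity) (by positivity) (one_add_norm_sq_le_mul w v)

end Weight

theorem exists_one_add_rpow_le_mul_exp {m β : ℝ} (hm : 0 ≤ m) (hβ : 0 < β) :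
    ∃ K : ℝ, ∀ t : ℝ, 0 ≤ t → (1 + t) ^ m ≤ K * exp (β * t) := by
  refine ⟨(m / β) ^ m * exp β, fun t ht ↦ ?_⟩
  have := ProbabilityTheory.rpow_abs_le_mul_exp_abs (1 + t) hm hβ.ne'
  rwa [abs_of_pos hβ, abs_of_nonneg (by positivity), mul_add, mul_one, exp_add,
    ← mul_assoc] at this

section Kernel

variable {E : Type*} [SeminormedAddCommGroup E]

/-- The kernel `K_{M,w}` of the linearized Boltzmann operator in the upper bound of Guo, conjugated
by the velocity weight `(1 + |v|²) ^ (ℓ / 2) * exp (b * |v|²)`. With temperature `θ` and weight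
parameter `ϱ`, the rates are `a = (1 - ε) / (8 * θ)` and `b = ±ϱ / (4 * θ)`. The value on the
diagonal `v = w` is `0`. -/
noncomputable def weightedKernel (ℓ a b : ℝ) (v w : E) : ℝ :=
  (‖v - w‖ + ‖v - w‖⁻¹) *
    exp (-a * ‖v - w‖ ^ 2 - a * (‖v‖ ^ 2 - ‖w‖ ^ 2) ^ 2 / ‖v - w‖ ^ 2) *
    ((1 + ‖v‖ ^ 2) ^ (ℓ / 2) * exp (b * ‖v‖ ^ 2)) /
    ((1 + ‖w‖ ^ 2) ^ (ℓ / 2) * exp (b * ‖w‖ ^ 2))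

theorem weightedKernel_nonneg (ℓ a b : ℝ) (v w : E) : 0 ≤ weightedKernel ℓ a b v w := by
  unfold weightedKernel
  positivity

theorem weightedKernel_eq (ℓ a b : ℝ) (v w : E) :
    weightedKernel ℓ a b v w =
      (‖v - w‖ + ‖v - w‖⁻¹) * ((1 + ‖v‖ ^ 2) ^ (ℓ / 2) / (1 + ‖w‖ ^ 2) ^ (ℓ / 2)) *
        exp (-a * ‖v - w‖ ^ 2 - a * (‖v‖ ^ 2 - ‖w‖ ^ 2) ^ 2 / ‖v - w‖ ^ 2 +
          b * (‖v‖ ^ 2 - ‖w‖ ^ 2)) := by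
  rw [weightedKernel, mul_sub b, exp_add, exp_sub (b * ‖v‖ ^ 2)]
  ring

theorem measurable_weightedKernel [MeasurableSpace E] [BorelSpace E] (ℓ a b : ℝ) (v : E) :
    Measurable (weightedKernel ℓ a b v) := by
  unfold weightedKernel
  fun_prop

end Kernel

section KernelBound

variable {E : Type*} [NormedAddCommGroup E] [InnerProductSpace ℝ E]

theorem weightedKernel_exponent_le {a b c : ℝ} (hc : 0 ≤ c) (habc : c + |b| / 2 ≤ a) (v x : E) :
    -a * ‖x‖ ^ 2 - a * (‖v‖ ^ 2 - ‖v + x‖ ^ 2) ^ 2 / ‖x‖ ^ 2 + b * (‖v‖ ^ 2 - ‖v + x‖ ^ 2) ≤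
      -(c / 2) * ‖x‖ ^ 2 + -(c / 2) * (⟪v, x⟫ / ‖x‖) ^ 2 := by
  rcases eq_or_ne x 0 with rfl | hx
  · simp
  set r := ‖x‖
  have hr₀ : 0 < r := norm_pos_iff.2 hx
  set t := ⟪v, x⟫ / r with ht
  have energy_diff : ‖v‖ ^ 2 - ‖v + x‖ ^ 2 = -(r + 2 * t) * r := by
    rw [norm_add_sq_real, ht]
    field_simp
    ring
  set q := -(r + 2 * t) with hq
  have young : b * (q * r) ≤ |b| / 2 * (r ^ 2 + q ^ 2) := by
    have : |q * r| ≤ (r ^ 2 + q ^ 2) / 2 := by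
      rw [abs_le]
      constructor <;> linarith [sq_nonneg (r + q), sq_nonneg (r - q)]
    calc b * (q * r) ≤ |b| * |q * r| := (le_abs_self _).trans_eq (abs_mul _ _)
      _ ≤ |b| * ((r ^ 2 + q ^ 2) / 2) := by gcongr
      _ = _ := by ring
  have positive_definite : (r ^ 2 + t ^ 2) / 2 ≤ r ^ 2 + q ^ 2 := by
    rw [hq]
    nlinarith [sq_nonneg (3 * r + 4 * t), sq_nonneg t]
  calc -a * r ^ 2 - a * (‖v‖ ^ 2 - ‖v + x‖ ^ 2) ^ 2 / r ^ 2 + b * (‖v‖ ^ 2 - ‖v + x‖ ^ 2)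
      = -a * (r ^ 2 + q ^ 2) + b * (q * r) := by
        rw [energy_diff]
        field_simp
        ring
    _ ≤ -(c * (r ^ 2 + q ^ 2)) := by
        have := mul_le_mul_of_nonneg_right habc (show 0 ≤ r ^ 2 + q ^ 2 by positivity)
        linarith
    _ ≤ -(c * ((r ^ 2 + t ^ 2) / 2)) := by gcongr
    _ = _ := by ring

theorem exists_weightedKernel_add_le (ℓ : ℝ) {c : ℝ} (hc : 0 < c) :
    ∃ K : ℝ, ∀ a b : ℝ, c + |b| / 2 ≤ a → ∀ v x : E,
      weightedKernel ℓ a b v (v + x) ≤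
        K * (‖x‖ ^ (-1 : ℝ) * exp (-(c / 4) * ‖x‖ ^ 2)) * angularGaussian (c / 2) v x := by
  obtain ⟨K, hpoly⟩ := exists_one_add_rpow_le_mul_exp
    (m := 1 + |ℓ / 2|) (β := c / 4) (by positivity) (by positivity)
  refine ⟨2 ^ |ℓ / 2| * K, fun a b habc v x ↦ ?_⟩
  have hsub : ‖v - (v + x)‖ = ‖x‖ := by simp
  have factor_inv : ‖x‖ + ‖x‖⁻¹ = ‖x‖⁻¹ * (1 + ‖x‖ ^ 2) := by
    rcases eq_or_ne x 0 with rfl | hx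
    · simp
    · field_simp
      ring
  have weight_le := one_add_norm_sq_rpow_div_le (ℓ / 2) v (v + x)
  rw [hsub] at weight_le
  rw [weightedKernel_eq, hsub, rpow_neg_one]
  calc _ ≤ ‖x‖⁻¹ * (1 + ‖x‖ ^ 2) * (2 * (1 + ‖x‖ ^ 2)) ^ |ℓ / 2| *
          exp (-(c / 2) * ‖x‖ ^ 2 + -(c / 2) * (⟪v, x⟫ / ‖x‖) ^ 2) := by
        rw [factor_inv]
        gcongr _ * ?_ * exp ?_
        exact weightedKernel_exponent_le hc.le habc v x
    _ = ‖x‖⁻¹ * 2 ^ |ℓ / 2| * (1 + ‖x‖ ^ 2) ^ (1 + |ℓ / 2|) * exp (-(c / 2) * ‖x‖ ^ 2) *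
          angularGaussian (c / 2) v x := by
        rw [mul_rpow (by positivity) (by positivity), rpow_add (by positivity), rpow_one, exp_add,
          angularGaussian]
        ring
    _ ≤ ‖x‖⁻¹ * 2 ^ |ℓ / 2| * (K * exp (c / 4 * ‖x‖ ^ 2)) * exp (-(c / 2) * ‖x‖ ^ 2) *
          angularGaussian (c / 2) v x := by
        gcongr
        · exact angularGaussian_nonneg ..
        · exact hpoly _ (by positivity)
    _ = _ := by
        have : -(c / 4) * ‖x‖ ^ 2 = c / 4 * ‖x‖ ^ 2 + -(c / 2) * ‖x‖ ^ 2 := by ring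
        rw [this, exp_add]
        ring

theorem gaussian_kernel_decay_general [FiniteDimensional ℝ E] [MeasurableSpace E] [BorelSpace E]
    (μ : Measure E) [μ.IsAddHaarMeasure] (hE : 1 < finrank ℝ E) (ℓ : ℝ) {c : ℝ} (hc : 0 < c) :
    ∃ C > 0, ∀ a b : ℝ, c + |b| / 2 ≤ a → ∀ v : E,
      Integrable (weightedKernel ℓ a b v) μ ∧
        ∫ w, weightedKernel ℓ a b v w ∂μ ≤ C / (1 + ‖v‖) := by
  have : Nontrivial E := nontrivial_of_finrank_pos (zero_lt_one.trans hE)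
  obtain ⟨K, hkernel⟩ := exists_weightedKernel_add_le (E := E) ℓ hc
  set f : ℝ → ℝ := fun r ↦ K * (r ^ (-1 : ℝ) * exp (-(c / 4) * r ^ 2))
  have f_integrable : Integrable (fun x : E ↦ f ‖x‖) μ :=
    (integrable_norm_rpow_mul_exp_neg_mul_sq μ (by positivity)
      (neg_lt_neg (mod_cast hE))).const_mul K
  obtain ⟨C, hC, hbound⟩ := exists_integral_norm_mul_angularGaussian_le μ f (half_pos hc)
  refine ⟨C, hC, fun a b habc v ↦ ?_⟩
  have bound_integrable : Integrable (fun x ↦ f ‖x‖ * angularGaussian (c / 2) v x) μ :=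
    integrable_norm_mul_angularGaussian μ f_integrable (half_pos hc).le v
  have translate_integrable : Integrable (fun x ↦ weightedKernel ℓ a b v (v + x)) μ :=
    bound_integrable.mono'
      ((measurable_weightedKernel ℓ a b v).comp (measurable_const_add v)).aestronglyMeasurable
      (.of_forall fun x ↦ (norm_of_nonneg (weightedKernel_nonneg ..)).trans_le
        (hkernel a b habc v x))
  refine ⟨by simpa using translate_integrable.comp_add_left (-v), ?_⟩
  calc ∫ w, weightedKernel ℓ a b v w ∂μ
      = ∫ x, weightedKernel ℓ a b v (v + x) ∂μ := (integral_add_left_eq_self _ v).symm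
    _ ≤ ∫ x, f ‖x‖ * angularGaussian (c / 2) v x ∂μ :=
        integral_mono translate_integrable bound_integrable (hkernel a b habc v)
    _ ≤ C / (1 + ‖v‖) := hbound v

end KernelBound

theorem one_div_add_half_abs_div_le_div {ε ϱ θ : ℝ} (hε : ε ≤ 1 / 4) (hϱ : |ϱ| ≤ 1 / 4)
    (hθ : |θ - 1| ≤ 1 / 2) :
    1 / 24 + |ϱ / (4 * θ)| / 2 ≤ (1 - ε) / (8 * θ) := by
  obtain ⟨hθ₁, hθ₂⟩ := abs_le.1 hθ
  have hθ₀ : 0 < θ := by linarith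
  rw [abs_div, abs_of_pos (by positivity : 0 < 4 * θ)]
  field_simp
  linarith

/-- Gaussian kernel integral bound (decay of the weighted kernel `K_{M,w}`):
for `ℓ ≥ 0` there are `C > 0`, `ε₀ > 0` and a neighborhood of `θ = 1` such that for all
sufficiently small `ε ≥ 0`, `ϱ ≥ 0`, all `θ` close to `1`, either sign `σ = ±1`, and
every `v ∈ ℝ³`, the kernel integral is bounded by `C/(1+|v|)`. -/
theorem gaussian_kernel_decay (ℓ : ℝ) (hℓ : 0 ≤ ℓ) :
    ∃ C > (0 : ℝ), ∃ ε₀ > (0 : ℝ), ∃ δ > (0 : ℝ),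
      ∀ ε ϱ θ : ℝ, 0 ≤ ε → ε ≤ ε₀ → 0 ≤ ϱ → ϱ ≤ ε₀ → |θ - 1| ≤ δ →
      ∀ σ : ℝ, σ = 1 ∨ σ = -1 →
      ∀ v : EuclideanSpace ℝ (Fin 3),
        (∫ v' : EuclideanSpace ℝ (Fin 3),
          (‖v - v'‖ + ‖v - v'‖⁻¹) *
            Real.exp (-((1 - ε) / (8 * θ)) * ‖v - v'‖ ^ 2 -
              ((1 - ε) / (8 * θ)) * (‖v‖ ^ 2 - ‖v'‖ ^ 2) ^ 2 / ‖v - v'‖ ^ 2) *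
            ((1 + ‖v‖ ^ 2) ^ (ℓ / 2) * Real.exp (σ * ϱ * ‖v‖ ^ 2 / (4 * θ))) /
            ((1 + ‖v'‖ ^ 2) ^ (ℓ / 2) * Real.exp (σ * ϱ * ‖v'‖ ^ 2 / (4 * θ)))) ≤
          C / (1 + ‖v‖) := by
  obtain ⟨C, hC, hbound⟩ := gaussian_kernel_decay_general
    (volume : Measure (EuclideanSpace ℝ (Fin 3))) (by simp) ℓ (c := 1 / 24) (by norm_num)
  refine ⟨C, hC, 1 / 4, by norm_num, 1 / 2, by norm_num, fun ε ϱ θ _ hε hϱ hϱ' hθ σ hσ v ↦ ?_⟩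
  have hσϱ : |σ * ϱ| ≤ 1 / 4 := by
    rcases hσ with rfl | rfl <;> simpa [abs_of_nonneg hϱ] using hϱ'
  simpa only [weightedKernel, div_mul_eq_mul_div (σ * ϱ)]
    using (hbound _ _ (one_div_add_half_abs_div_le_div hε hσϱ hθ) v).2
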